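/- arXiv:0811.3810 — 4 statements merged into one kernel-verified Lean document; each statement's English description precedes it below -/
import Mathlib

section
/- Let r ≥ 0 and s ≥ 1 be integers and let a : ℕ^r → ℂ be rapidly decreasing. Then for every complex z with Re z > s one has Σ_{(n,m) ∈ ℕ^r × ℕ^s with |n|+|m| ≥ 1} a(n)·(|n|+|m|)^{−z} = Σ_{N=1}^{∞} N^{−z} · ( Σ_{n ∈ ℕ^r with |n| ≤ N} a(n)·C(N−|n|+s−1, s−1) ), where C(·,·) denotes the binomial coefficient, and both series converge absolutely. -/
/-- Stars and bars. -/
theorem card_fiber (s : ℕ) (hs : 1 ≤ s) (t : ℕ) :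
    Nat.card {m : Fin s → ℕ // ∑ i, m i = t} = (t + s - 1).choose (s - 1) := by
  have h := Finset.card_finsuppAntidiag_nat_eq_choose (s := (Finset.univ : Finset (Fin s))) t
  have e : {m : Fin s → ℕ // ∑ i, m i = t} ≃
      (Finset.univ : Finset (Fin s)).finsuppAntidiag t :=
    (Finsupp.equivFunOnFinite.symm).subtypeEquiv (fun m => by
      simp [Finset.mem_finsuppAntidiag])
  rw [Nat.card_congr e, Nat.card_eq_fintype_card, Fintype.card_coe, h, Finset.card_univ,
    Fintype.card_fin, add_comm s t]
  apply Nat.choose_symm_of_eq_add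
  omega

theorem finite_fiber (s : ℕ) (t : ℕ) : Finite {m : Fin s → ℕ // ∑ i, m i = t} := by
  have e : {m : Fin s → ℕ // ∑ i, m i = t} ≃
      (Finset.univ : Finset (Fin s)).finsuppAntidiag t :=
    (Finsupp.equivFunOnFinite.symm).subtypeEquiv (fun m => by
      simp [Finset.mem_finsuppAntidiag])
  exact Finite.of_equiv _ e.symm

theorem choose_bound (t k : ℕ) : (t + k).choose k ≤ (t + 1) ^ k := by
  induction k with
  | zero => simp
  | succ k ih =>
    have h := Nat.add_one_mul_choose_eq (t + k) k
    have h2 : (t + k + 1) ≤ (t + 1) * (k + 1) := by nlinarith [Nat.zero_le (t * k)]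
    have h3 : (t + k + 1) * (t + k).choose k ≤ ((t + 1) * (k + 1)) * (t + 1) ^ k :=
      Nat.mul_le_mul h2 ih
    rw [h] at h3
    have : (t + k + 1).choose (k + 1) * (k + 1) ≤ (t + 1) ^ (k + 1) * (k + 1) := by
      calc _ ≤ _ := h3
        _ = _ := by ring
    exact Nat.le_of_mul_le_mul_right this (Nat.succ_pos k)

theorem summable_weight (s : ℕ) (σ : ℝ) (hσ : (s : ℝ) < σ) :
    Summable (fun m : Fin s → ℕ => ((1 + ∑ i, m i : ℕ) : ℝ) ^ (-σ)) := by
  rcases Nat.eq_zero_or_pos s with rfl | hs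
  · exact Summable.of_finite
  rw [← (Equiv.sigmaFiberEquiv (fun m : Fin s → ℕ => ∑ i, m i)).summable_iff,
    summable_sigma_of_nonneg (fun x => by simp only [Function.comp]; positivity)]
  have key : ∀ t : ℕ, ∀ y : {m : Fin s → ℕ // ∑ i, m i = t},
      ((fun m : Fin s → ℕ => ((1 + ∑ i, m i : ℕ) : ℝ) ^ (-σ)) ∘
        (Equiv.sigmaFiberEquiv (fun m : Fin s → ℕ => ∑ i, m i))) ⟨t, y⟩
        = ((1 + t : ℕ) : ℝ) ^ (-σ) := by
    rintro t ⟨m, rfl⟩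
    rfl
  refine ⟨fun t => ?_, ?_⟩
  · have := finite_fiber s t
    exact Summable.of_finite
  · have hsum : Summable (fun t : ℕ => ((t + 1 : ℕ) : ℝ) ^ ((s : ℝ) - 1 - σ)) :=
      (summable_nat_add_iff (f := fun t : ℕ => (t : ℝ) ^ ((s : ℝ) - 1 - σ)) 1).2
        (Real.summable_nat_rpow.2 (by linarith))
    refine Summable.of_nonneg_of_le (fun t => tsum_nonneg fun y => ?_) (fun t => ?_) hsum
    · simp only [Function.comp]; positivity
    · rw [tsum_congr (key t), tsum_const, card_fiber s hs t, nsmul_eq_mul]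
      have hb : (((t + s - 1).choose (s - 1) : ℕ) : ℝ) ≤ ((t + 1 : ℕ) : ℝ) ^ (s - 1) := by
        have := choose_bound t (s - 1)
        rw [← Nat.add_sub_assoc hs] at this
        exact_mod_cast this
      have hpos : (0 : ℝ) < ((t + 1 : ℕ) : ℝ) := by positivity
      have he : ((t + 1 : ℕ) : ℝ) ^ ((s : ℝ) - 1 - σ)
          = ((t + 1 : ℕ) : ℝ) ^ (s - 1) * ((1 + t : ℕ) : ℝ) ^ (-σ) := by
        rw [← Real.rpow_natCast, add_comm 1 t, ← Real.rpow_add hpos, Nat.cast_sub hs]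
        congr 1
        push_cast
        ring
      rw [he]
      gcongr

theorem summable_a (r : ℕ) (a : (Fin r → ℕ) → ℂ)
    (ha : ∀ p : ℕ, ∃ C : ℝ, ∀ n : Fin r → ℕ,
      ((1 + ∑ i, n i : ℕ) : ℝ) ^ p * ‖a n‖ ≤ C) : Summable (fun n => ‖a n‖) := by
  obtain ⟨C, hC⟩ := ha (r + 1)
  have h := (summable_weight r ((r + 1 : ℕ) : ℝ) (by push_cast; linarith)).mul_left C
  refine Summable.of_nonneg_of_le (fun n => norm_nonneg _) (fun n => ?_) h
  have hpos : (0 : ℝ) < ((1 + ∑ i, n i : ℕ) : ℝ) := by positivity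
  rw [Real.rpow_neg hpos.le, Real.rpow_natCast, ← div_eq_mul_inv, le_div_iff₀ (by positivity),
    mul_comm]
  exact hC n

theorem summable_main (r s : ℕ) (a : (Fin r → ℕ) → ℂ)
    (ha : Summable (fun n => ‖a n‖)) (z : ℂ) (hz : (s : ℝ) < z.re) :
    Summable (fun x : {x : (Fin r → ℕ) × (Fin s → ℕ) // 1 ≤ (∑ i, x.1 i) + ∑ i, x.2 i} =>
        ‖a x.val.1 * ((((∑ i, x.val.1 i) + ∑ i, x.val.2 i : ℕ) : ℂ)) ^ (-z)‖) := by
  have hz0 : 0 < z.re := lt_of_le_of_lt (Nat.cast_nonneg s) hz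
  have h := (ha.mul_of_nonneg (summable_weight s z.re hz) (fun n => norm_nonneg _)
    (fun m => by simp only [Pi.zero_apply]; positivity)).mul_left ((2 : ℝ) ^ z.re)
  have h' := h.comp_injective (Subtype.val_injective
    (p := fun x : (Fin r → ℕ) × (Fin s → ℕ) => 1 ≤ (∑ i, x.1 i) + ∑ i, x.2 i))
  refine Summable.of_nonneg_of_le (fun n => norm_nonneg _) ?_ h'
  rintro ⟨⟨n, m⟩, hx⟩
  simp only [Function.comp] at hx ⊢
  rw [norm_mul, Complex.norm_natCast_cpow_of_pos hx, Complex.neg_re]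
  generalize (∑ i, n i) = u at *
  generalize (∑ i, m i) = v at *
  have h1 : ((1 + v : ℕ) : ℝ) / 2 ≤ ((u + v : ℕ) : ℝ) := by
    have : 1 + v ≤ 2 * (u + v) := by omega
    have : ((1 + v : ℕ) : ℝ) ≤ 2 * ((u + v : ℕ) : ℝ) := by exact_mod_cast this
    linarith
  have h2 : ((u + v : ℕ) : ℝ) ^ (-z.re) ≤ (((1 + v : ℕ) : ℝ) / 2) ^ (-z.re) :=
    Real.rpow_le_rpow_of_nonpos (by positivity) h1 (by linarith)
  rw [Real.div_rpow (by positivity) (by norm_num), Real.rpow_neg (x := 2) (by norm_num),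
    div_inv_eq_mul] at h2
  calc _ ≤ ‖a n‖ * (((1 + v : ℕ) : ℝ) ^ (-z.re) * 2 ^ z.re) := by gcongr
    _ = _ := by ring

/-- Regroup the pairs `(n, m)` by the value `N = |n| + |m|`, then by `n`. -/
def regroup (r s : ℕ) :
    (Σ N : {N : ℕ // 1 ≤ N}, Σ n : Fin r → ℕ,
      {m : Fin s → ℕ // (∑ i, n i) + ∑ i, m i = (N : ℕ)}) ≃
    {x : (Fin r → ℕ) × (Fin s → ℕ) // 1 ≤ (∑ i, x.1 i) + ∑ i, x.2 i} where
  toFun y := ⟨(y.2.1, y.2.2.1), by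
    have h1 := y.2.2.2
    have h2 := y.1.2
    simp only
    omega⟩
  invFun x := ⟨⟨_, x.2⟩, x.1.1, x.1.2, rfl⟩
  left_inv := by
    rintro ⟨⟨N, hN⟩, n, m, h⟩
    simp only at h
    subst h
    rfl
  right_inv := by
    rintro ⟨⟨n, m⟩, h⟩
    rfl

theorem card_fiber' (s : ℕ) (hs : 1 ≤ s) (u N : ℕ) :
    Nat.card {m : Fin s → ℕ // u + ∑ i, m i = N} =
      if u ≤ N then (N - u + s - 1).choose (s - 1) else 0 := by
  split_ifs with h
  · rw [← card_fiber s hs (N - u)]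
    exact Nat.card_congr (Equiv.subtypeEquivRight fun m => by omega)
  · have : IsEmpty {m : Fin s → ℕ // u + ∑ i, m i = N} := ⟨fun m => by
      have := m.2
      omega⟩
    exact Nat.card_of_isEmpty

/-- For `r ≥ 0`, `s ≥ 1` and rapidly decreasing `a : ℕ^r → ℂ`, for every `z` with `Re z > s`:
`Σ_{(n,m), |n|+|m| ≥ 1} a(n)·(|n|+|m|)^{−z}
  = Σ_{N=1}^∞ N^{−z}·(Σ_{|n| ≤ N} a(n)·C(N−|n|+s−1, s−1))`,
and both series converge absolutely. -/
theorem xi_eq_dirichlet_series (r s : ℕ) (hs : 1 ≤ s) (a : (Fin r → ℕ) → ℂ)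
    (ha : ∀ p : ℕ, ∃ C : ℝ, ∀ n : Fin r → ℕ,
      ((1 + ∑ i, n i : ℕ) : ℝ) ^ p * ‖a n‖ ≤ C) :
    ∀ z : ℂ, (s : ℝ) < z.re →
      Summable (fun x : {x : (Fin r → ℕ) × (Fin s → ℕ) // 1 ≤ (∑ i, x.1 i) + ∑ i, x.2 i} =>
        ‖a x.val.1 * ((((∑ i, x.val.1 i) + ∑ i, x.val.2 i : ℕ) : ℂ)) ^ (-z)‖) ∧
      Summable (fun N : {N : ℕ // 1 ≤ N} =>
        ‖((N : ℕ) : ℂ) ^ (-z) * ∑' n : Fin r → ℕ,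
            (if (∑ i, n i) ≤ (N : ℕ) then
              a n * ((((N : ℕ) - ∑ i, n i + s - 1).choose (s - 1) : ℕ) : ℂ)
            else 0)‖) ∧
      (∑' x : {x : (Fin r → ℕ) × (Fin s → ℕ) // 1 ≤ (∑ i, x.1 i) + ∑ i, x.2 i},
          a x.val.1 * ((((∑ i, x.val.1 i) + ∑ i, x.val.2 i : ℕ) : ℂ)) ^ (-z))
        = ∑' N : {N : ℕ // 1 ≤ N},
            ((N : ℕ) : ℂ) ^ (-z) * ∑' n : Fin r → ℕ,
              (if (∑ i, n i) ≤ (N : ℕ) then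
                a n * ((((N : ℕ) - ∑ i, n i + s - 1).choose (s - 1) : ℕ) : ℂ)
              else 0) := by
  intro z hz
  have h1 := summable_main r s a (summable_a r a ha) z hz
  have h2 := h1.of_norm
  have h3 := (regroup r s).summable_iff.2 h2
  have hin : ∀ N : {N : ℕ // 1 ≤ N},
      (∑' c : Σ n : Fin r → ℕ, {m : Fin s → ℕ // (∑ i, n i) + ∑ i, m i = (N : ℕ)},
        ((fun x : {x : (Fin r → ℕ) × (Fin s → ℕ) // 1 ≤ (∑ i, x.1 i) + ∑ i, x.2 i} =>
          a x.val.1 * ((((∑ i, x.val.1 i) + ∑ i, x.val.2 i : ℕ) : ℂ)) ^ (-z)) ∘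
            regroup r s) ⟨N, c⟩) =
      ((N : ℕ) : ℂ) ^ (-z) * ∑' n : Fin r → ℕ,
              (if (∑ i, n i) ≤ (N : ℕ) then
                a n * ((((N : ℕ) - ∑ i, n i + s - 1).choose (s - 1) : ℕ) : ℂ)
              else 0) := by
    intro N
    rw [(h3.sigma_factor N).tsum_sigma, ← tsum_mul_left]
    refine tsum_congr fun n => ?_
    have : ∀ m : {m : Fin s → ℕ // (∑ i, n i) + ∑ i, m i = (N : ℕ)},
        ((fun x : {x : (Fin r → ℕ) × (Fin s → ℕ) // 1 ≤ (∑ i, x.1 i) + ∑ i, x.2 i} =>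
          a x.val.1 * ((((∑ i, x.val.1 i) + ∑ i, x.val.2 i : ℕ) : ℂ)) ^ (-z)) ∘
            regroup r s) ⟨N, n, m⟩ = a n * ((N : ℕ) : ℂ) ^ (-z) := by
      intro m
      have hm := m.2
      simp only [Function.comp, regroup, Equiv.coe_fn_mk, hm]
    rw [tsum_congr this, tsum_const, card_fiber' s hs, nsmul_eq_mul]
    split_ifs
    · ring
    · simp
  refine ⟨h1, ?_, ?_⟩
  · have h4 := h3.sigma
    simp only [hin] at h4
    exact h4.norm
  · rw [← (regroup r s).tsum_eq, ← tsum_congr hin]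
    exact h3.tsum_sigma
end

section
/- Let R be a unital ring and let a, b ∈ R satisfy a·b = 1, and put p = 1 − b·a. Then p² = p, a·p = 0, p·b = 0, and for all natural numbers k and r one has p·a^k·b^r·p = p if k = r, and p·a^k·b^r·p = 0 if k ≠ r. -/
/-- In a unital ring, if `a * b = 1` and `p = 1 - b * a`, then `p` is an idempotent with
`a * p = 0`, `p * b = 0`, and `p * a^k * b^r * p` equals `p` when `k = r` and `0` when `k ≠ r`. -/
theorem defect_projection_relations (R : Type*) [Ring R] (a b : R) (hab : a * b = 1) :
    (1 - b * a) * (1 - b * a) = 1 - b * a ∧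
    a * (1 - b * a) = 0 ∧
    (1 - b * a) * b = 0 ∧
    ∀ k r : ℕ,
      (k = r → (1 - b * a) * a ^ k * b ^ r * (1 - b * a) = 1 - b * a) ∧
      (k ≠ r → (1 - b * a) * a ^ k * b ^ r * (1 - b * a) = 0) := by
  have h1 : a * (1 - b * a) = 0 := by
    rw [mul_sub, ← mul_assoc, hab]; simp
  have h2 : (1 - b * a) * b = 0 := by
    rw [sub_mul, mul_assoc, hab]; simp
  have h0 : (1 - b * a) * (1 - b * a) = 1 - b * a := by
    rw [sub_mul (1 : R), mul_assoc b, h1]; simp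
  refine ⟨h0, h1, h2, ?_⟩
  generalize 1 - b * a = p at h0 h1 h2
  intro k
  induction k with
  | zero =>
    intro r
    cases r with
    | zero => simp [h0]
    | succ r =>
      refine ⟨fun h => by omega, fun _ => ?_⟩
      rw [pow_zero, mul_one, pow_succ', ← mul_assoc p, h2]; simp
  | succ k ih =>
    intro r
    cases r with
    | zero =>
      refine ⟨fun h => by omega, fun _ => ?_⟩
      rw [pow_zero, mul_one, pow_succ, mul_assoc, mul_assoc, h1]; simp
    | succ r =>
      have e : p * a ^ (k + 1) * b ^ (r + 1) * p = p * a ^ k * b ^ r * p := by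
        have : a ^ (k + 1) * b ^ (r + 1) = a ^ k * b ^ r := by
          rw [pow_succ, pow_succ', mul_assoc, ← mul_assoc a b, hab, one_mul]
        rw [mul_assoc p, this, ← mul_assoc p]
      rw [e]
      exact ⟨fun h => (ih r).1 (by omega), fun h => (ih r).2 (by omega)⟩
end

section
/- Let f and g be continuous complex-valued functions on the circle 𝕋. If the operator M_f·P₀ + M_g·(1−P₀) on L²(𝕋) is compact, then f = 0 and g = 0. -/
open MeasureTheory

theorem compact_aux {H : Type*} [NormedAddCommGroup H] [InnerProductSpace ℂ H] [CompleteSpace H]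
    (A : H →L[ℂ] H) (hA : IsCompactOperator A) (e : ℕ → H) (he : Orthonormal ℂ e) (c : ℝ)
    (hc : ∀ n, c ≤ ‖A (e n)‖) : c ≤ 0 := by
  have hK := hA.isCompact_closure_image_closedBall (r := 1)
  have hmem : ∀ n, A (e n) ∈ closure (A '' Metric.closedBall 0 1) := fun n =>
    subset_closure ⟨e n, by simp [he.1 n], rfl⟩
  obtain ⟨v, -, φ, hφ, hlim⟩ := hK.tendsto_subseq hmem
  have h1 : Filter.Tendsto (fun n => inner ℂ (e n) (ContinuousLinearMap.adjoint A v))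
      Filter.atTop (nhds 0) := by
    have h2 := (he.inner_products_summable (ContinuousLinearMap.adjoint A v)).tendsto_atTop_zero
    rw [tendsto_zero_iff_norm_tendsto_zero]
    have h3 := h2.sqrt
    simpa using h3
  have h4 : Filter.Tendsto (fun n => inner ℂ (A (e (φ n))) v) Filter.atTop (nhds 0) := by
    have := h1.comp hφ.tendsto_atTop
    simpa [Function.comp_def, ContinuousLinearMap.adjoint_inner_right] using this
  have h5 : Filter.Tendsto (fun n => inner ℂ (A (e (φ n))) v) Filter.atTop
      (nhds (inner ℂ v v)) := hlim.inner tendsto_const_nhds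
  have hv : v = 0 := inner_self_eq_zero.1 (tendsto_nhds_unique h5 h4)
  subst hv
  have h6 := hlim.norm
  rw [norm_zero] at h6
  exact ge_of_tendsto' h6 fun n => hc _

theorem mul_aux (T : ℝ) [hT : Fact (0 < T)] (f : C(AddCircle T, ℂ))
    (A M : Lp ℂ 2 (@AddCircle.haarAddCircle T hT) →L[ℂ] Lp ℂ 2 (@AddCircle.haarAddCircle T hT))
    (hM : ∀ u : Lp ℂ 2 (@AddCircle.haarAddCircle T hT),
      (M u : AddCircle T → ℂ) =ᵐ[@AddCircle.haarAddCircle T hT] fun x => f x * u x)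
    (hA : IsCompactOperator A) (k : ℕ → ℤ) (hk : Function.Injective k)
    (h : ∀ n, A (fourierBasis (k n)) = M (fourierBasis (k n))) : f = 0 := by
  have key := compact_aux A hA (fun n => fourierBasis (k n))
    (fourierBasis.orthonormal.comp k hk)
    ‖ContinuousMap.toLp (E := ℂ) 2 (@AddCircle.haarAddCircle T hT) ℂ f‖ (by
      intro n
      rw [h]
      apply Lp.norm_le_norm_of_ae_le
      rw [coe_fourierBasis]
      filter_upwards [hM (fourierLp 2 (k n)), coeFn_fourierLp (T := T) 2 (k n),
        ContinuousMap.coeFn_toLp (p := 2) (𝕜 := ℂ) (@AddCircle.haarAddCircle T hT) f]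
        with x h1 h2 h3
      rw [h1, h2, h3, norm_mul, fourier_apply, Circle.norm_coe, mul_one])
  have h0 := norm_le_zero_iff.1 key
  exact ContinuousMap.toLp_injective (p := 2) (𝕜 := ℂ) (@AddCircle.haarAddCircle T hT)
    (h0.trans (map_zero _).symm)

/-- Let `f, g` be continuous functions on the circle, `P₀` the orthogonal projection of
`L²(𝕋)` onto the closed span of the characters `e_n`, `n ≥ 0` (characterized by its action on
the Fourier basis), and `M_f, M_g` the multiplication operators. If `M_f·P₀ + M_g·(1−P₀)` is
compact, then `f = 0` and `g = 0`. -/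
theorem eq_zero_of_compact_hardy_combination (T : ℝ) [hT : Fact (0 < T)]
    (f g : C(AddCircle T, ℂ))
    (P₀ Mf Mg : Lp ℂ 2 (@AddCircle.haarAddCircle T hT)
      →L[ℂ] Lp ℂ 2 (@AddCircle.haarAddCircle T hT))
    (hP : ∀ n : ℤ, P₀ (fourierBasis n) = if 0 ≤ n then fourierBasis n else 0)
    (hMf : ∀ u : Lp ℂ 2 (@AddCircle.haarAddCircle T hT),
      (Mf u : AddCircle T → ℂ) =ᵐ[@AddCircle.haarAddCircle T hT] fun x => f x * u x)
    (hMg : ∀ u : Lp ℂ 2 (@AddCircle.haarAddCircle T hT),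
      (Mg u : AddCircle T → ℂ) =ᵐ[@AddCircle.haarAddCircle T hT] fun x => g x * u x)
    (hcpt : IsCompactOperator ⇑(Mf * P₀ + Mg * (1 - P₀))) :
    f = 0 ∧ g = 0 := by
  constructor
  · refine mul_aux T f _ Mf hMf hcpt (fun n => (n : ℤ)) Nat.cast_injective fun n => ?_
    have h2 := hP (n : ℤ)
    rw [if_pos (Int.natCast_nonneg n)] at h2
    simp [-coe_fourierBasis, h2]
  · refine mul_aux T g _ Mg hMg hcpt (fun n => -(n : ℤ) - 1) (fun a b h => ?_) fun n => ?_
    · simpa using h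
    · have hn : ¬ (0 ≤ -(n : ℤ) - 1) := by omega
      have h2 := hP (-(n : ℤ) - 1)
      rw [if_neg hn] at h2
      simp [-coe_fourierBasis, h2]
end

section
/- Every compact operator on ℓ²(ℤ) belongs to the smallest closed star-subalgebra of the algebra of bounded operators on ℓ²(ℤ) that contains the bilateral shift W and the operator F₀. -/
/-- The standard orthonormal basis vector `e_k` of `ℓ²(ℤ)`. -/
noncomputable def ellTwoZBasis (k : ℤ) : lp (fun _ : ℤ => ℂ) 2 := lp.single 2 k 1

open InnerProductSpace in
theorem rankOne_mem_of_basis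
    (M : StarSubalgebra ℂ (lp (fun _ : ℤ => ℂ) 2 →L[ℂ] lp (fun _ : ℤ => ℂ) 2))
    (hM : IsClosed (M : Set (lp (fun _ : ℤ => ℂ) 2 →L[ℂ] lp (fun _ : ℤ => ℂ) 2)))
    (y : lp (fun _ : ℤ => ℂ) 2)
    (h : ∀ k, rankOne ℂ (ellTwoZBasis k) y ∈ M) (x : lp (fun _ : ℤ => ℂ) 2) :
    rankOne ℂ x y ∈ M := by
  have hs : HasSum (fun i : ℤ => lp.single 2 i (x i)) x :=
    lp.hasSum_single ENNReal.ofNat_ne_top x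
  have hc : Continuous fun z : lp (fun _ : ℤ => ℂ) 2 => rankOne ℂ z y := by fun_prop
  have ht := (hc.tendsto x).comp hs
  refine hM.mem_of_tendsto ht (Filter.Eventually.of_forall fun s => ?_)
  have : rankOne ℂ (∑ i ∈ s, lp.single 2 i (x i)) y
      = ∑ i ∈ s, (x i) • rankOne ℂ (ellTwoZBasis i) y := by
    have h1 : ∀ i, (lp.single 2 i (x i) : lp (fun _ : ℤ => ℂ) 2) = x i • ellTwoZBasis i := by
      intro i
      rw [ellTwoZBasis, ← lp.single_smul]
      simp
    simp only [h1, map_sum, map_smul, sum_apply, smul_apply]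
  simp only [Function.comp, SetLike.mem_coe]
  rw [this]
  exact sum_mem fun i _ => M.smul_mem (h i) _

theorem inner_ellTwoZBasis (j k : ℤ) :
    inner ℂ (ellTwoZBasis j) (ellTwoZBasis k) = if j = k then (1 : ℂ) else 0 := by
  rw [ellTwoZBasis, ellTwoZBasis, lp.inner_single_left, lp.single_apply]
  by_cases h : j = k
  · subst h; simp
  · simp [h]

theorem adjoint_shift (W : lp (fun _ : ℤ => ℂ) 2 →L[ℂ] lp (fun _ : ℤ => ℂ) 2)
    (hW : ∀ k : ℤ, W (ellTwoZBasis k) = ellTwoZBasis (k + 1)) (k : ℤ) :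
    (star W) (ellTwoZBasis k) = ellTwoZBasis (k - 1) := by
  ext j
  have key : ∀ f : lp (fun _ : ℤ => ℂ) 2, f j = inner ℂ (ellTwoZBasis j) f := by
    intro f
    rw [ellTwoZBasis, lp.inner_single_left]; simp
  rw [key, key, ContinuousLinearMap.star_eq_adjoint, ContinuousLinearMap.adjoint_inner_right, hW,
    inner_ellTwoZBasis, inner_ellTwoZBasis]
  simp only [eq_sub_iff_add_eq]

open InnerProductSpace in
theorem rankOne_mem_all
    (M : StarSubalgebra ℂ (lp (fun _ : ℤ => ℂ) 2 →L[ℂ] lp (fun _ : ℤ => ℂ) 2))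
    (hM : IsClosed (M : Set (lp (fun _ : ℤ => ℂ) 2 →L[ℂ] lp (fun _ : ℤ => ℂ) 2)))
    (W F₀ : lp (fun _ : ℤ => ℂ) 2 →L[ℂ] lp (fun _ : ℤ => ℂ) 2)
    (hW : ∀ k : ℤ, W (ellTwoZBasis k) = ellTwoZBasis (k + 1))
    (hF : ∀ k : ℤ, F₀ (ellTwoZBasis k)
      = if 0 ≤ k then ellTwoZBasis k else -ellTwoZBasis k)
    (hWM : W ∈ M) (hFM : F₀ ∈ M) (x y : lp (fun _ : ℤ => ℂ) 2) :
    rankOne ℂ x y ∈ M := by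
  have hW' := adjoint_shift W hW
  have hWs : star W ∈ M := star_mem hWM
  have h00 : rankOne ℂ (ellTwoZBasis 0) (ellTwoZBasis 0) ∈ M := by
    have : rankOne ℂ (ellTwoZBasis 0) (ellTwoZBasis 0)
        = (1 / 2 : ℂ) • (F₀ - W * F₀ * star W) := by
      refine lp.ext_continuousLinearMap ENNReal.ofNat_ne_top fun k => ?_
      ext1
      change rankOne ℂ (ellTwoZBasis 0) (ellTwoZBasis 0) (ellTwoZBasis k)
        = (1 / 2 : ℂ) • (F₀ (ellTwoZBasis k) - W (F₀ ((star W) (ellTwoZBasis k))))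
      simp only [rankOne_apply, inner_ellTwoZBasis, hW', hF]
      rcases lt_trichotomy k 0 with h | h | h
      · rw [if_neg (by omega), if_neg (by omega), if_neg (by omega), map_neg, hW]
        simp
      · subst h
        rw [if_pos rfl, if_pos le_rfl, if_neg (by omega), map_neg, hW]
        simp only [sub_add_cancel, sub_neg_eq_add, ← two_smul ℂ (ellTwoZBasis 0), smul_smul]
        norm_num
      · rw [if_neg (by omega), if_pos (by omega), if_pos (by omega), hW]
        simp
    rw [this]
    exact M.smul_mem (sub_mem hFM (mul_mem (mul_mem hWM hFM) hWs)) _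
  have hk : ∀ k : ℤ, rankOne ℂ (ellTwoZBasis k) (ellTwoZBasis 0) ∈ M := by
    intro k
    induction k using Int.induction_on with
    | zero => exact h00
    | succ i ih =>
      have := mul_mem hWM ih
      rwa [ContinuousLinearMap.mul_def, comp_rankOne, hW] at this
    | pred i ih =>
      have := mul_mem hWs ih
      rwa [ContinuousLinearMap.mul_def, comp_rankOne, hW'] at this
  have hx := rankOne_mem_of_basis M hM _ hk
  have h1 := mul_mem (hx x) (star_mem (hx y))
  rw [ContinuousLinearMap.star_eq_adjoint, adjoint_rankOne, ContinuousLinearMap.mul_def,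
    rankOne_comp_rankOne, inner_ellTwoZBasis] at h1
  simpa using h1

open InnerProductSpace in
theorem compact_mem_of_rankOne_mem {E : Type*} [NormedAddCommGroup E] [InnerProductSpace ℂ E]
    [CompleteSpace E] (M : StarSubalgebra ℂ (E →L[ℂ] E)) (hM : IsClosed (M : Set (E →L[ℂ] E)))
    (h : ∀ x y : E, rankOne ℂ x y ∈ M) (K : E →L[ℂ] E) (hK : IsCompactOperator K) : K ∈ M := by
  have hcl : K ∈ closure (M : Set (E →L[ℂ] E)) := by
    rw [Metric.mem_closure_iff]
    intro ε hε
    have hc : IsCompact (closure (K '' Metric.closedBall 0 1)) :=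
      hK.isCompact_closure_image_closedBall 1
    obtain ⟨t, ht, hcov⟩ := Metric.totallyBounded_iff.1 hc.totallyBounded (ε / 2) (half_pos hε)
    let V : Submodule ℂ E := Submodule.span ℂ t
    haveI : FiniteDimensional ℂ V := FiniteDimensional.span_of_finite ℂ ht
    refine ⟨V.starProjection * K, ?_, ?_⟩
    · rw [(stdOrthonormalBasis ℂ V).starProjection_eq_sum_rankOne, Finset.sum_mul]
      refine sum_mem fun i _ => ?_
      rw [ContinuousLinearMap.mul_def, rankOne_comp]
      exact h _ _
    · rw [dist_eq_norm]
      refine lt_of_le_of_lt ?_ (half_lt_self hε)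
      refine ContinuousLinearMap.opNorm_le_of_unit_norm (half_pos hε).le fun x hx => ?_
      have hmem : K x ∈ closure (K '' Metric.closedBall 0 1) :=
        subset_closure ⟨x, by simp [hx], rfl⟩
      obtain ⟨y, hy, hxy⟩ := Set.mem_iUnion₂.1 (hcov hmem)
      have hyV : y ∈ V := Submodule.subset_span hy
      rw [Metric.mem_ball, dist_eq_norm] at hxy
      change ‖K x - V.starProjection (K x)‖ ≤ _
      rw [Submodule.starProjection_minimal]
      refine le_trans (ciInf_le ⟨0, ?_⟩ (⟨y, hyV⟩ : V)) hxy.le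
      rintro _ ⟨z, rfl⟩
      exact norm_nonneg _
  rwa [hM.closure_eq] at hcl

/-- Every compact operator on `ℓ²(ℤ)` belongs to the smallest closed star-subalgebra of the
bounded operators containing the bilateral shift `W` and the sign operator `F₀`. -/
theorem compact_mem_closed_star_algebra_shift_sign
    (W F₀ : lp (fun _ : ℤ => ℂ) 2 →L[ℂ] lp (fun _ : ℤ => ℂ) 2)
    (hW : ∀ k : ℤ, W (ellTwoZBasis k) = ellTwoZBasis (k + 1))
    (hF : ∀ k : ℤ, F₀ (ellTwoZBasis k)
      = if 0 ≤ k then ellTwoZBasis k else -ellTwoZBasis k)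
    (K : lp (fun _ : ℤ => ℂ) 2 →L[ℂ] lp (fun _ : ℤ => ℂ) 2)
    (hK : IsCompactOperator K) :
    K ∈ (StarAlgebra.adjoin ℂ ({W, F₀} :
      Set (lp (fun _ : ℤ => ℂ) 2 →L[ℂ] lp (fun _ : ℤ => ℂ) 2))).topologicalClosure := by
  have hsub := StarSubalgebra.le_topologicalClosure (StarAlgebra.adjoin ℂ ({W, F₀} :
      Set (lp (fun _ : ℤ => ℂ) 2 →L[ℂ] lp (fun _ : ℤ => ℂ) 2)))
  have hcl := StarSubalgebra.isClosed_topologicalClosure (StarAlgebra.adjoin ℂ ({W, F₀} :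
      Set (lp (fun _ : ℤ => ℂ) 2 →L[ℂ] lp (fun _ : ℤ => ℂ) 2)))
  exact compact_mem_of_rankOne_mem _ hcl
    (rankOne_mem_all _ hcl W F₀ hW hF
      (hsub (StarAlgebra.subset_adjoin ℂ _ (by simp)))
      (hsub (StarAlgebra.subset_adjoin ℂ _ (by simp)))) K hK
end
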